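/- Theorem 1.1 (classification of 3-reflective smooth planar projective billiards). Every 3-reflective triple of C^∞-smooth line-framed curves in ℝ² is right-spherical near its orbits: if (a₁,v₁), (a₂,v₂), (a₃,v₃) is a 3-reflective triple with orbit data (Ω, g), then there exist linearly independent vectors p, q, r ∈ ℝ³ and a nonempty open subset Ω′ ⊆ Ω such that for every (s,u) ∈ Ω′, writing t = g(s,u): (a₁(s),1) ∈ span{p,q}, (a₂(u),1) ∈ span{q,r}, (a₃(t),1) ∈ span{r,p}, and r ∈ span{(a₁(s),1),(v₁(s),0)}, p ∈ span{(a₂(u),1),(v₂(u),0)}, q ∈ span{(a₃(t),1),(v₃(t),0)} in ℝ³ (i.e., viewed in the projective plane, the three boundary curves lie on the three sides of the triangle with vertices [p], [q], [r], and each field line passes through the opposite vertex). -/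

import Mathlib

/-- Two nonzero vectors `u`, `w` of the plane are symmetric with respect to the pair
`(v, τ)` (field direction, tangent direction): there are nonzero scalars `p`, `q` with
`p • u + q • w` on the line spanned by `τ` and `p • u - q • w` on the line spanned by `v`.
This encodes harmonicity (cross-ratio `-1`) of the four lines. -/
def PlaneSym (𝕜 : Type*) [Field 𝕜] (v τ u w : 𝕜 × 𝕜) : Prop :=
  ∃ p q : 𝕜, p ≠ 0 ∧ q ≠ 0 ∧ p • u + q • w ∈ Submodule.span 𝕜 {τ} ∧
    p • u - q • w ∈ Submodule.span 𝕜 {v}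

/-- Lift of a point of the plane to homogeneous coordinates: `x ↦ (x, 1)`. -/
def liftPt (𝕜 : Type*) [Field 𝕜] (x : 𝕜 × 𝕜) : 𝕜 × 𝕜 × 𝕜 := (x.1, x.2, 1)

/-- Lift of a direction of the plane to homogeneous coordinates: `x ↦ (x, 0)`. -/
def liftDir (𝕜 : Type*) [Field 𝕜] (x : 𝕜 × 𝕜) : 𝕜 × 𝕜 × 𝕜 := (x.1, x.2, 0)

/-!
In the frame formed by the tangent line and the field line at a vertex, the two sides through that
vertex have opposite slopes. Differentiating this with one vertex fixed at a time expresses the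
partial derivatives of the third parameter through the offsets `ℓ i j` of the vertex `j` relative to
the tangent line at the vertex `i`, and compatibility of the three reflection laws becomes
`∏ ℓ i (i + 1) = ∏ ℓ i (i + 2)`: by Menelaus' theorem the tangent lines meet the opposite sides in
three collinear points. The parameters `s i` then satisfy `∑ n i • ds i = 0`, where `n i` is the
inverse of `ℓ (i + 1) i * ℓ (i + 2) i`.

The logarithmic derivative of the Menelaus relation and the exterior derivative of `∑ n i • ds i`
are two linear conditions on the curvatures at the three vertices. The first one makes suitably
rescaled curvatures proportional to the `n i`; in the second one the three terms are then equal, so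
they all vanish. Hence the three curves are straight, and for fixed tangent lines the Menelaus
relation together with harmonicity forces each field line through the intersection of the other two
tangent lines.
-/

/-! ### Plane vectors and the reflection law -/

namespace ProjectiveBilliard

section Algebra

variable {𝕜 : Type*} [Field 𝕜]

/-- The determinant of two plane vectors; it vanishes exactly on proportional pairs. -/
def cross (x y : 𝕜 × 𝕜) : 𝕜 := x.1 * y.2 - x.2 * y.1

theorem cross_zero_right (x : 𝕜 × 𝕜) : cross x 0 = 0 := by
  simp only [cross, Prod.fst_zero, Prod.snd_zero, mul_zero, sub_zero]

theorem cross_self (x : 𝕜 × 𝕜) : cross x x = 0 := by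
  simp only [cross]; ring

theorem cross_swap (x y : 𝕜 × 𝕜) : cross x y = -cross y x := by
  simp only [cross]; ring

theorem cross_smul_left (c : 𝕜) (x y : 𝕜 × 𝕜) : cross (c • x) y = c * cross x y := by
  simp only [cross, Prod.smul_fst, Prod.smul_snd, smul_eq_mul]; ring

theorem cross_smul_right (c : 𝕜) (x y : 𝕜 × 𝕜) : cross x (c • y) = c * cross x y := by
  simp only [cross, Prod.smul_fst, Prod.smul_snd, smul_eq_mul]; ring

theorem exists_cross_ne_zero {x : 𝕜 × 𝕜} (hx : x ≠ 0) : ∃ y, cross x y ≠ 0 := by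
  by_contra! h
  have h₁ := h (0, 1)
  have h₂ := h (1, 0)
  simp only [cross, mul_one, mul_zero, sub_zero, zero_sub, neg_eq_zero] at h₁ h₂
  exact hx (Prod.ext h₁ h₂)

theorem ne_zero_of_cross_ne_zero {x y : 𝕜 × 𝕜} (h : cross x y ≠ 0) : x ≠ 0 := by
  rintro rfl
  simp [cross] at h

theorem mem_span_singleton_of_cross_eq_zero {x y : 𝕜 × 𝕜} (hx : x ≠ 0) (h : cross x y = 0) :
    y ∈ Submodule.span 𝕜 {x} := by
  obtain ⟨w, hw⟩ := exists_cross_ne_zero hx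
  refine Submodule.mem_span_singleton.2 ⟨cross y w / cross x w, ?_⟩
  rw [div_eq_inv_mul, mul_smul, inv_smul_eq_iff₀ hw]
  simp only [cross] at h ⊢
  ext
  · simp only [Prod.smul_fst, smul_eq_mul]; linear_combination -w.1 * h
  · simp only [Prod.smul_snd, smul_eq_mul]; linear_combination -w.2 * h

theorem collinear_of_cross_eq_zero {p q r : 𝕜 × 𝕜} (h : cross (q - p) (r - p) = 0) :
    Collinear 𝕜 {p, q, r} := by
  obtain rfl | hqp := eq_or_ne q p
  · simpa using collinear_pair 𝕜 q r
  · obtain ⟨c, hc⟩ := Submodule.mem_span_singleton.1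
      (mem_span_singleton_of_cross_eq_zero (sub_ne_zero.2 hqp) h)
    refine (collinear_iff_of_mem (Set.mem_insert p _)).2 ⟨q - p, ?_⟩
    rintro x (rfl | rfl | rfl)
    · exact ⟨0, by simp⟩
    · exact ⟨1, by simp⟩
    · exact ⟨c, by simp [hc]⟩

/-- The slope of `w` in the frame `(τ, v)`, normalised so that the field line `v` has slope zero
and the tangent line `τ` has infinite slope. -/
def frameSlope (τ v w : 𝕜 × 𝕜) : 𝕜 := cross v w / cross τ w

end Algebra

end ProjectiveBilliard

namespace PlaneSym

open ProjectiveBilliard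

variable {𝕜 : Type*} [Field 𝕜] {v τ u w : 𝕜 × 𝕜}

theorem symm (h : PlaneSym 𝕜 v τ u w) : PlaneSym 𝕜 v τ w u := by
  obtain ⟨p, q, hp, hq, hτ, hv⟩ := h
  refine ⟨q, p, hq, hp, by rwa [add_comm], ?_⟩
  rw [← neg_sub]
  exact Submodule.neg_mem _ hv

theorem cross_tangent_ne_zero (h : PlaneSym 𝕜 v τ u w) (huw : cross u w ≠ 0) :
    cross τ u ≠ 0 := by
  obtain ⟨p, q, -, hq, hτ, -⟩ := h
  obtain ⟨k, hk⟩ := Submodule.mem_span_singleton.1 hτ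
  have hku : k * cross τ u = -q * cross u w := by
    rw [← cross_smul_left, hk]
    simp only [cross, Prod.fst_add, Prod.snd_add, Prod.smul_fst, Prod.smul_snd, smul_eq_mul]
    ring
  exact right_ne_zero_of_mul (hku.trans_ne (mul_ne_zero (neg_ne_zero.2 hq) huw))

theorem cross_frame_ne_zero [NeZero (2 : 𝕜)] (h : PlaneSym 𝕜 v τ u w) (huw : cross u w ≠ 0) :
    cross τ v ≠ 0 := by
  obtain ⟨p, q, hp, hq, hτ, hv⟩ := h
  obtain ⟨k, hk⟩ := Submodule.mem_span_singleton.1 hτ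
  obtain ⟨m, hm⟩ := Submodule.mem_span_singleton.1 hv
  have hkm : k * (m * cross τ v) = -2 * p * q * cross u w := by
    rw [← cross_smul_right, ← cross_smul_left, hk, hm]
    simp only [cross, Prod.fst_add, Prod.snd_add, Prod.fst_sub, Prod.snd_sub, Prod.smul_fst,
      Prod.smul_snd, smul_eq_mul]
    ring
  have hne : -2 * p * q * cross u w ≠ 0 := by simp [hp, hq, huw, two_ne_zero]
  exact right_ne_zero_of_mul (right_ne_zero_of_mul (hkm.trans_ne hne))

theorem frameSlope_add_eq_zero (h : PlaneSym 𝕜 v τ u w) (huw : cross u w ≠ 0) :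
    frameSlope τ v u + frameSlope τ v w = 0 := by
  have hτu := h.cross_tangent_ne_zero huw
  have hτw := h.symm.cross_tangent_ne_zero (by rwa [cross_swap, neg_ne_zero])
  obtain ⟨p, q, -, hq, hτ, hv⟩ := h
  obtain ⟨k, hk⟩ := Submodule.mem_span_singleton.1 hτ
  obtain ⟨m, hm⟩ := Submodule.mem_span_singleton.1 hv
  simp only [Prod.ext_iff, Prod.fst_add, Prod.snd_add, Prod.fst_sub, Prod.snd_sub, Prod.smul_fst,
    Prod.smul_snd, smul_eq_mul] at hk hm
  have hmu : m * cross v u = q * cross u w := by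
    simp only [cross]; linear_combination hm.1 * u.2 - hm.2 * u.1
  have hm₀ : m ≠ 0 := left_ne_zero_of_mul (hmu.trans_ne (mul_ne_zero hq huw))
  have hu : frameSlope τ v u = -k / m := by
    rw [frameSlope, div_eq_div_iff hτu hm₀]
    simp only [cross]
    linear_combination (hk.1 + hm.1) * u.2 - (hk.2 + hm.2) * u.1
  have hw : frameSlope τ v w = k / m := by
    rw [frameSlope, div_eq_div_iff hτw hm₀]
    simp only [cross]
    linear_combination (hm.1 - hk.1) * w.2 - (hm.2 - hk.2) * w.1
  rw [hu, hw, neg_div, neg_add_cancel]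

end PlaneSym

namespace ProjectiveBilliard

open Filter Topology

/-! ### Reflective triangles -/

section Triangle

variable {𝕜 : Type*} [Field 𝕜]

theorem fin_three_add_two_add_one (i : Fin 3) : i + 2 + 1 = i := by
  decide +revert

theorem fin_three_add_one_add_two (i : Fin 3) : i + 1 + 2 = i := by
  decide +revert

theorem fin_three_add_one_add_one (i : Fin 3) : i + 1 + 1 = i + 2 := by
  decide +revert

theorem fin_three_add_two_add_two (i : Fin 3) : i + 2 + 2 = i + 1 := by
  decide +revert

theorem fin_three_eq_add_of_ne {i j : Fin 3} (h : i ≠ j) : j = i + 1 ∨ j = i + 2 := by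
  decide +revert

theorem forall_fin_three {P : Fin 3 → Prop} : (∀ i, P i) ↔ P 0 ∧ P 1 ∧ P 2 :=
  Fin.forall_fin_succ.trans (and_congr_right' Fin.forall_fin_two)

@[to_additive]
theorem prod_univ_three_rotate {M : Type*} [CommMonoid M] (f : Fin 3 → M) (i : Fin 3) :
    ∏ j, f j = f i * f (i + 1) * f (i + 2) := by
  rw [← Equiv.prod_comp (Equiv.addLeft i) f, Fin.prod_univ_three]
  simp only [Equiv.coe_addLeft, add_zero]

/-- Position of the vertex `p j` relative to the line through the vertex `p i` in the direction
`d i`. -/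
def offset (p d : Fin 3 → 𝕜 × 𝕜) (i j : Fin 3) : 𝕜 := cross (d i) (p j - p i)

theorem offset_self (p d : Fin 3 → 𝕜 × 𝕜) (i : Fin 3) : offset p d i i = 0 := by
  rw [offset, sub_self, cross_zero_right]

/-- A nondegenerate triangle with vertices `p i` whose sides satisfy at each vertex the projective
reflection law with tangent direction `τ i` and field direction `v i`. -/
structure ReflectiveTriangle (p τ v : Fin 3 → 𝕜 × 𝕜) : Prop where
  area_ne_zero : cross (p 1 - p 0) (p 2 - p 0) ≠ 0
  planeSym (i : Fin 3) : PlaneSym 𝕜 (v i) (τ i) (p (i + 1) - p i) (p (i + 2) - p i)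

/-- By Menelaus' theorem, the tangent lines at the vertices meet the opposite sides in three
collinear points. -/
def MenelausRelation (p τ : Fin 3 → 𝕜 × 𝕜) : Prop :=
  ∏ i, offset p τ i (i + 1) = ∏ i, offset p τ i (i + 2)

theorem cross_sides_eq (p : Fin 3 → 𝕜 × 𝕜) (i : Fin 3) :
    cross (p (i + 1) - p i) (p (i + 2) - p i) = cross (p 1 - p 0) (p 2 - p 0) := by
  match i with
  | 0 => rfl
  | 1 | 2 =>
    simp only [cross, Fin.reduceAdd, Prod.fst_sub, Prod.snd_sub]
    ring

namespace ReflectiveTriangle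

variable {p τ v : Fin 3 → 𝕜 × 𝕜} (hT : ReflectiveTriangle p τ v)

include hT

theorem cross_sides_ne_zero (i : Fin 3) : cross (p (i + 1) - p i) (p (i + 2) - p i) ≠ 0 :=
  (cross_sides_eq p i).trans_ne hT.area_ne_zero

theorem offset_ne_zero {i j : Fin 3} (hij : i ≠ j) : offset p τ i j ≠ 0 := by
  obtain rfl | rfl := fin_three_eq_add_of_ne hij
  · exact (hT.planeSym i).cross_tangent_ne_zero (hT.cross_sides_ne_zero i)
  · refine (hT.planeSym i).symm.cross_tangent_ne_zero ?_
    rw [cross_swap]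
    exact neg_ne_zero.2 (hT.cross_sides_ne_zero i)

theorem cross_frame_ne_zero [NeZero (2 : 𝕜)] (i : Fin 3) : cross (τ i) (v i) ≠ 0 :=
  (hT.planeSym i).cross_frame_ne_zero (hT.cross_sides_ne_zero i)

theorem frameSlope_add_eq_zero {i j k : Fin 3} (hij : i ≠ j) (hik : i ≠ k) (hjk : j ≠ k) :
    frameSlope (τ i) (v i) (p j - p i) + frameSlope (τ i) (v i) (p k - p i) = 0 := by
  have h := (hT.planeSym i).frameSlope_add_eq_zero (hT.cross_sides_ne_zero i)
  obtain rfl | rfl := fin_three_eq_add_of_ne hij <;> obtain rfl | rfl := fin_three_eq_add_of_ne hik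
  · exact absurd rfl hjk
  · exact h
  · rwa [add_comm]
  · exact absurd rfl hjk

end ReflectiveTriangle

end Triangle

section LineForm

variable {𝕜 : Type*} [Field 𝕜]

/-- The linear form on homogeneous coordinates whose kernel is the projective line through the
point `x` in the direction `d`. -/
def lineForm (x d : 𝕜 × 𝕜) : Module.Dual 𝕜 (𝕜 × 𝕜 × 𝕜) where
  toFun X := cross d ((X.1, X.2.1) - X.2.2 • x)
  map_add' X Y := by
    simp only [cross, Prod.fst_add, Prod.snd_add, Prod.fst_sub, Prod.snd_sub, Prod.smul_fst,
      Prod.smul_snd, smul_eq_mul]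
    ring
  map_smul' c X := by
    simp only [cross, Prod.fst_sub, Prod.snd_sub, Prod.smul_fst, Prod.smul_snd, smul_eq_mul,
      RingHom.id_apply]
    ring

theorem lineForm_apply (x d : 𝕜 × 𝕜) (X : 𝕜 × 𝕜 × 𝕜) :
    lineForm x d X = cross d ((X.1, X.2.1) - X.2.2 • x) := rfl

theorem lineForm_liftPt (x d y : 𝕜 × 𝕜) : lineForm x d (liftPt 𝕜 y) = cross d (y - x) := by
  rw [lineForm_apply, liftPt, one_smul]

theorem lineForm_smul_add (x d : 𝕜 × 𝕜) (k m : 𝕜) :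
    lineForm (x + m • d) (k • d) = k • lineForm x d := by
  refine LinearMap.ext fun X => ?_
  simp only [lineForm_apply, cross, LinearMap.smul_apply, Prod.fst_add, Prod.snd_add, Prod.fst_sub,
    Prod.snd_sub, Prod.smul_fst, Prod.smul_snd, smul_eq_mul]
  ring

theorem mem_span_lift_of_lineForm_eq_zero {x d : 𝕜 × 𝕜} (hd : d ≠ 0) {X : 𝕜 × 𝕜 × 𝕜}
    (hX : lineForm x d X = 0) : X ∈ Submodule.span 𝕜 {liftPt 𝕜 x, liftDir 𝕜 d} := by
  obtain ⟨c, hc⟩ := Submodule.mem_span_singleton.1 (mem_span_singleton_of_cross_eq_zero hd hX)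
  refine Submodule.mem_span_pair.2 ⟨X.2.2, c, ?_⟩
  simp only [Prod.ext_iff, Prod.fst_sub, Prod.snd_sub, Prod.smul_fst, Prod.smul_snd,
    smul_eq_mul] at hc
  simp only [liftPt, liftDir, Prod.ext_iff, Prod.fst_add, Prod.snd_add, Prod.smul_fst,
    Prod.smul_snd, smul_eq_mul, mul_zero, add_zero, mul_one, and_true]
  exact ⟨by linear_combination hc.1, by linear_combination hc.2⟩

/-- Barycentric coordinates with respect to the triangle `p`, evaluated under a line form. -/
theorem cross_sides_mul_lineForm (p d : Fin 3 → 𝕜 × 𝕜) (X : 𝕜 × 𝕜 × 𝕜) (i j : Fin 3) :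
    cross (p (i + 1) - p i) (p (i + 2) - p i) * lineForm (p j) (d j) X =
      lineForm (p (i + 1)) (p (i + 2) - p (i + 1)) X * offset p d j i +
      lineForm (p (i + 2)) (p i - p (i + 2)) X * offset p d j (i + 1) +
      lineForm (p i) (p (i + 1) - p i) X * offset p d j (i + 2) := by
  simp only [lineForm_apply, offset, cross, Prod.fst_sub, Prod.snd_sub, Prod.smul_fst,
    Prod.smul_snd, smul_eq_mul]
  ring

theorem MenelausRelation.prod_eq {p τ : Fin 3 → 𝕜 × 𝕜} (hM : MenelausRelation p τ) (i : Fin 3) :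
    offset p τ i (i + 1) * offset p τ (i + 1) (i + 2) * offset p τ (i + 2) i =
      offset p τ i (i + 2) * offset p τ (i + 1) i * offset p τ (i + 2) (i + 1) := by
  simpa only [MenelausRelation, prod_univ_three_rotate _ i, fin_three_add_two_add_one,
    fin_three_add_one_add_two, fin_three_add_one_add_one, fin_three_add_two_add_two] using hM

theorem ReflectiveTriangle.lineForm_frame_eq_zero {p τ v : Fin 3 → 𝕜 × 𝕜}
    (hT : ReflectiveTriangle p τ v) (hM : MenelausRelation p τ) {i : Fin 3} {X : 𝕜 × 𝕜 × 𝕜}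
    (h₁ : lineForm (p (i + 1)) (τ (i + 1)) X = 0) (h₂ : lineForm (p (i + 2)) (τ (i + 2)) X = 0) :
    lineForm (p i) (v i) X = 0 := by
  have hb₁ : offset p τ i (i + 1) ≠ 0 := hT.offset_ne_zero (by simp)
  have hb₂ : offset p τ i (i + 2) ≠ 0 := hT.offset_ne_zero (by simp)
  have h₁₂ : offset p τ (i + 1) (i + 2) ≠ 0 := hT.offset_ne_zero (by simp)
  have h₂₁ : offset p τ (i + 2) (i + 1) ≠ 0 := hT.offset_ne_zero (by simp)
  have hM := hM.prod_eq i
  have hR : offset p v i (i + 1) * offset p τ i (i + 2) +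
      offset p τ i (i + 1) * offset p v i (i + 2) = 0 := by
    have h := (div_add_div _ _ hb₁ hb₂).symm.trans
      (hT.frameSlope_add_eq_zero (by simp) (by simp) (by simp))
    exact (div_eq_zero_iff.1 h).resolve_right (mul_ne_zero hb₁ hb₂)
  have e₀ := cross_sides_mul_lineForm p v X i i
  have e₁ := cross_sides_mul_lineForm p τ X i (i + 1)
  have e₂ := cross_sides_mul_lineForm p τ X i (i + 2)
  rw [offset_self, mul_zero, zero_add] at e₀
  rw [h₁, offset_self, mul_zero, mul_zero, add_zero] at e₁
  rw [h₂, offset_self, mul_zero, mul_zero, add_zero] at e₂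
  have hne := mul_ne_zero (mul_ne_zero hb₁ h₁₂) h₂₁
  refine (mul_eq_zero.1 ((mul_eq_zero.1 ?_).resolve_left hne)).resolve_left
    (hT.cross_sides_ne_zero i)
  rw [e₀]
  set α := lineForm (p (i + 1)) (p (i + 2) - p (i + 1)) X
  linear_combination -offset p τ i (i + 1) * offset p τ (i + 1) (i + 2) * offset p v i (i + 1) * e₂
    - offset p τ i (i + 1) * offset p τ (i + 2) (i + 1) * offset p v i (i + 2) * e₁
    - α * offset p v i (i + 1) * hM - α * offset p τ (i + 2) (i + 1) * offset p τ (i + 1) i * hR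

theorem MenelausRelation.det_offset_ne_zero [NeZero (2 : 𝕜)] {p τ v : Fin 3 → 𝕜 × 𝕜}
    (hM : MenelausRelation p τ) (hT : ReflectiveTriangle p τ v) :
    (Matrix.of (offset p τ)).det ≠ 0 := by
  have hdet : (Matrix.of (offset p τ)).det = 2 * ∏ i, offset p τ i (i + 1) := by
    have h := hM.prod_eq 0
    simp only [zero_add] at h
    simp only [Matrix.det_fin_three, Matrix.of_apply, offset_self, Fin.prod_univ_three, zero_add,
      Fin.reduceAdd]
    linear_combination -h
  rw [hdet]
  exact mul_ne_zero two_ne_zero (Finset.prod_ne_zero_iff.2 fun i _ => hT.offset_ne_zero (by simp))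

open Module in
theorem exists_basis_coord_eq {ι V : Type*} [Fintype ι] [DecidableEq ι] [AddCommGroup V]
    [Module 𝕜 V] [FiniteDimensional 𝕜 V] (hV : finrank 𝕜 V = Fintype.card ι)
    (L : ι → Dual 𝕜 V) (y : ι → V) (hdet : (Matrix.of fun i j => L i (y j)).det ≠ 0) :
    ∃ b : Basis ι 𝕜 V, ∀ i, b.coord i = L i := by
  have hfin : finrank 𝕜 V = finrank 𝕜 (ι → 𝕜) := by rw [hV, finrank_fintype_fun_eq_card]
  have hsurj : Function.Surjective (LinearMap.pi L) := by
    have hli : LinearIndependent 𝕜 (LinearMap.pi L ∘ y) :=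
      Matrix.linearIndependent_cols_of_det_ne_zero hdet
    rw [← LinearMap.range_eq_top, eq_top_iff,
      ← hli.span_eq_top_of_card_eq_finrank' (finrank_fintype_fun_eq_card 𝕜).symm, Submodule.span_le]
    rintro _ ⟨j, rfl⟩
    exact LinearMap.mem_range_self _ (y j)
  have hinj := (LinearMap.injective_iff_surjective_of_finrank_eq_finrank hfin).2 hsurj
  exact ⟨Basis.ofEquivFun (LinearEquiv.ofBijective _ ⟨hinj, hsurj⟩), fun i => rfl⟩

theorem mem_span_pair_of_coord_eq_zero {V : Type*} [AddCommGroup V] [Module 𝕜 V]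
    (b : Module.Basis (Fin 3) 𝕜 V) {i : Fin 3} {X : V} (hX : b.coord i X = 0) :
    X ∈ Submodule.span 𝕜 {b (i + 1), b (i + 2)} := by
  refine Submodule.mem_span_pair.2 ⟨b.coord (i + 1) X, b.coord (i + 2) X, ?_⟩
  have hsum := b.sum_repr X
  rw [sum_univ_three_rotate _ i] at hsum
  rwa [← b.coord_apply i, hX, zero_smul, zero_add] at hsum

theorem ReflectiveTriangle.exists_basis_of_mem_tangentLines [NeZero (2 : 𝕜)]
    {p₀ τ₀ v₀ : Fin 3 → 𝕜 × 𝕜} (hT₀ : ReflectiveTriangle p₀ τ₀ v₀)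
    (hM₀ : MenelausRelation p₀ τ₀) :
    ∃ b : Module.Basis (Fin 3) 𝕜 (𝕜 × 𝕜 × 𝕜), ∀ p τ v : Fin 3 → 𝕜 × 𝕜,
      ReflectiveTriangle p τ v → MenelausRelation p τ →
      (∀ i, τ i ∈ Submodule.span 𝕜 {τ₀ i}) → (∀ i, p i - p₀ i ∈ Submodule.span 𝕜 {τ₀ i}) →
      ∀ i, liftPt 𝕜 (p i) ∈ Submodule.span 𝕜 {b (i + 1), b (i + 2)} ∧
        b i ∈ Submodule.span 𝕜 {liftPt 𝕜 (p i), liftDir 𝕜 (v i)} := by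
  obtain ⟨b, hb⟩ := exists_basis_coord_eq (by simp) (fun i => lineForm (p₀ i) (τ₀ i))
    (fun j => liftPt 𝕜 (p₀ j)) (by simp only [lineForm_liftPt]; exact hM₀.det_offset_ne_zero hT₀)
  refine ⟨b, fun p τ v hT hM hτ hp i => ⟨mem_span_pair_of_coord_eq_zero b ?_, ?_⟩⟩
  · obtain ⟨m, hm⟩ := Submodule.mem_span_singleton.1 (hp i)
    rw [hb, lineForm_liftPt, ← hm, cross_smul_right, cross_self, mul_zero]
  · have hline {j k : Fin 3} (hjk : k ≠ j) : lineForm (p j) (τ j) (b k) = 0 := by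
      obtain ⟨c, hc⟩ := Submodule.mem_span_singleton.1 (hτ j)
      obtain ⟨m, hm⟩ := Submodule.mem_span_singleton.1 (hp j)
      rw [← hc, ← add_sub_cancel (p₀ j) (p j), ← hm, lineForm_smul_add, ← hb,
        LinearMap.smul_apply, b.coord_apply, b.repr_self_apply, if_neg hjk, smul_zero]
    have hv : v i ≠ 0 := fun h => hT.cross_frame_ne_zero i (by rw [h, cross_zero_right])
    exact mem_span_lift_of_lineForm_eq_zero hv
      (hT.lineForm_frame_eq_zero hM (hline (by simp)) (hline (by simp)))

end LineForm

/-! ### Calculus of plane curves -/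

section CrossCalculus

variable {𝕜 : Type*} [NontriviallyNormedField 𝕜]

theorem hasStrictDerivAt_cross (d : 𝕜 × 𝕜) {f : 𝕜 → 𝕜 × 𝕜} {f' : 𝕜 × 𝕜} {t : 𝕜}
    (hf : HasStrictDerivAt f f' t) :
    HasStrictDerivAt (fun s => cross d (f s)) (cross d f') t := by
  have h₁ := (ContinuousLinearMap.fst 𝕜 𝕜 𝕜).hasStrictFDerivAt.comp_hasStrictDerivAt t hf
  have h₂ := (ContinuousLinearMap.snd 𝕜 𝕜 𝕜).hasStrictFDerivAt.comp_hasStrictDerivAt t hf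
  exact (h₂.const_mul d.1).fun_sub (h₁.const_mul d.2)

theorem hasStrictDerivAt_frameSlope (τ v : 𝕜 × 𝕜) {f : 𝕜 → 𝕜 × 𝕜} {f' : 𝕜 × 𝕜} {t : 𝕜}
    (hf : HasStrictDerivAt f f' t) (hτ : cross τ (f t) ≠ 0) :
    HasStrictDerivAt (fun s => frameSlope τ v (f s))
      (cross τ v * cross (f t) f' / cross τ (f t) ^ 2) t := by
  refine ((hasStrictDerivAt_cross v hf).fun_div (hasStrictDerivAt_cross τ hf) hτ).congr_deriv ?_
  congr 1
  simp only [cross]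
  ring

theorem hasFDerivAt_cross_comp {E : Type*} [NormedAddCommGroup E] [NormedSpace 𝕜 E]
    {c d : 𝕜 → 𝕜 × 𝕜} {c' d' : 𝕜 × 𝕜} {x y : E → 𝕜} {x' y' : E →L[𝕜] 𝕜} {z : E}
    (hc : HasDerivAt c c' (x z)) (hd : HasDerivAt d d' (y z)) (hx : HasFDerivAt x x' z)
    (hy : HasFDerivAt y y' z) :
    HasFDerivAt (fun w => cross (c (x w)) (d (y w)))
      (cross c' (d (y z)) • x' + cross (c (x z)) d' • y') z := by
  have fst {f : 𝕜 → 𝕜 × 𝕜} {f' t} (hf : HasDerivAt f f' t) : HasDerivAt (fun s => (f s).1) f'.1 t :=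
    (ContinuousLinearMap.fst 𝕜 𝕜 𝕜).hasFDerivAt.comp_hasDerivAt t hf
  have snd {f : 𝕜 → 𝕜 × 𝕜} {f' t} (hf : HasDerivAt f f' t) : HasDerivAt (fun s => (f s).2) f'.2 t :=
    (ContinuousLinearMap.snd 𝕜 𝕜 𝕜).hasFDerivAt.comp_hasDerivAt t hf
  refine ((((fst hc).comp_hasFDerivAt z hx).mul ((snd hd).comp_hasFDerivAt z hy)).sub
    (((snd hc).comp_hasFDerivAt z hx).mul ((fst hd).comp_hasFDerivAt z hy))).congr_fderiv ?_
  ext w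
  simp only [cross, Function.comp_apply, add_apply, sub_apply, smul_apply, smul_eq_mul]
  ring

theorem hasDerivAt_of_comp_eventuallyEq [CompleteSpace 𝕜] {φ h k : 𝕜 → 𝕜} {h' k' u : 𝕜}
    (hφ : ContinuousAt φ u) (hh : HasStrictDerivAt h h' (φ u)) (hh' : h' ≠ 0)
    (hk : HasDerivAt k k' u) (heq : h ∘ φ =ᶠ[𝓝 u] k) : HasDerivAt φ (h'⁻¹ * k') u := by
  have hinv : φ =ᶠ[𝓝 u] hh.localInverse h h' (φ u) hh' ∘ k := by
    filter_upwards [heq, hφ.eventually (hh.eventually_left_inverse hh')] with t ht hφt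
    rw [Function.comp_apply, ← ht, Function.comp_apply, hφt]
  have hd := (hh.to_localInverse hh').hasDerivAt
  rw [← Function.comp_apply (f := h), heq.eq_of_nhds] at hd
  exact (hd.comp u hk).congr_of_eventuallyEq hinv

theorem hasDerivAt_of_frameSlope_add_eq_zero [CompleteSpace 𝕜] {b c : 𝕜 → 𝕜 × 𝕜} {φ : 𝕜 → 𝕜}
    {u : 𝕜} {b' c' o τ v : 𝕜 × 𝕜} (hb : HasStrictDerivAt b b' u) (hc : HasStrictDerivAt c c' (φ u))
    (hφ : ContinuousAt φ u) (hτv : cross τ v ≠ 0) (hτb : cross τ (b u - o) ≠ 0)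
    (hτc : cross τ (c (φ u) - o) ≠ 0) (hcc' : cross (c (φ u) - o) c' ≠ 0)
    (h : ∀ᶠ t in 𝓝 u, frameSlope τ v (b t - o) + frameSlope τ v (c (φ t) - o) = 0) :
    HasDerivAt φ (-(cross (b u - o) b' * cross τ (c (φ u) - o) ^ 2 /
      (cross τ (b u - o) ^ 2 * cross (c (φ u) - o) c'))) u := by
  have hslope_b := hasStrictDerivAt_frameSlope τ v (hb.sub_const o) hτb
  have hslope_c := hasStrictDerivAt_frameSlope τ v (hc.sub_const o) hτc
  have hne : cross τ v * cross (c (φ u) - o) c' / cross τ (c (φ u) - o) ^ 2 ≠ 0 :=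
    div_ne_zero (mul_ne_zero hτv hcc') (pow_ne_zero 2 hτc)
  refine (hasDerivAt_of_comp_eventuallyEq hφ hslope_c hne hslope_b.hasDerivAt.neg
    (h.mono fun t ht => eq_neg_of_add_eq_zero_right ht)).congr_deriv ?_
  field_simp

theorem hasStrictFDerivAt_of_partial [IsRCLikeNormedField 𝕜] {f f₁ f₂ : 𝕜 × 𝕜 → 𝕜} {z : 𝕜 × 𝕜}
    (h₁ : ∀ᶠ w in 𝓝 z, HasDerivAt (fun s => f (s, w.2)) (f₁ w) w.1)
    (h₂ : ∀ᶠ w in 𝓝 z, HasDerivAt (fun u => f (w.1, u)) (f₂ w) w.2)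
    (hf₁ : ContinuousAt f₁ z) (hf₂ : ContinuousAt f₂ z) :
    HasStrictFDerivAt f (f₁ z • .fst 𝕜 𝕜 𝕜 + f₂ z • .snd 𝕜 𝕜 𝕜) z := by
  have hspan := (ContinuousLinearMap.toSpanSingletonLIE 𝕜 𝕜).continuous.continuousAt (x := f₁ z)
  have hspan' := (ContinuousLinearMap.toSpanSingletonLIE 𝕜 𝕜).continuous.continuousAt (x := f₂ z)
  refine (hasStrictFDerivAt_uncurry_coprod (f := Function.curry f)
    (f₁ := fun s u => .toSpanSingleton 𝕜 (f₁ (s, u)))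
    (f₂ := fun s u => .toSpanSingleton 𝕜 (f₂ (s, u)))
    (h₁.mono fun w hw => hw.hasFDerivAt) (h₂.mono fun w hw => hw.hasFDerivAt)
    (hspan.comp hf₁) (hspan'.comp hf₂)).congr_fderiv ?_
  ext <;> simp [Function.HasUncurry.uncurry]

theorem fderiv_mul_eq_of_const_on_level {E : Type*} [NormedAddCommGroup E] [NormedSpace ℝ E]
    [CompleteSpace E] {f φ : E → ℝ} {f' φ' : StrongDual ℝ E} {x : E}
    (hf : HasStrictFDerivAt f f' x) (hφ : HasStrictFDerivAt φ φ' x)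
    (h : ∀ᶠ y in 𝓝 x, f y = f x → φ y = φ x) (v w : E) : f' v * φ' w = f' w * φ' v := by
  have hmin : IsLocalMinOn φ {y | f y = f x} x :=
    eventually_nhdsWithin_iff.2 (h.mono fun y hy hfy => (hy hfy).ge)
  obtain ⟨c, d, hne, hcd⟩ :=
    IsLocalExtrOn.exists_multipliers_of_hasStrictFDerivAt_1d (.inl hmin) hf hφ
  have hv : c * f' v + d * φ' v = 0 := DFunLike.congr_fun hcd v
  have hw : c * f' w + d * φ' w = 0 := DFunLike.congr_fun hcd w
  by_cases hc : c = 0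
  · have hd : d ≠ 0 := fun hd => hne (Prod.ext hc hd)
    refine mul_left_cancel₀ hd ?_
    linear_combination f' v * hw - f' w * hv
  · refine mul_left_cancel₀ hc ?_
    linear_combination φ' w * hv - φ' v * hw

end CrossCalculus

section Curvature

theorem eventually_eq_of_eventually_hasDerivAt_zero {f : ℝ → ℝ} {t₀ : ℝ}
    (h : ∀ᶠ t in 𝓝 t₀, HasDerivAt f 0 t) : ∀ᶠ t in 𝓝 t₀, f t = f t₀ := by
  obtain ⟨ε, hε, hball⟩ := Metric.eventually_nhds_iff_ball.1 h
  filter_upwards [Metric.ball_mem_nhds t₀ hε] with t ht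
  exact Metric.isOpen_ball.is_const_of_deriv_eq_zero (convex_ball t₀ ε).isPreconnected
    (fun s hs => (hball s hs).differentiableAt.differentiableWithinAt)
    (fun s hs => (hball s hs).deriv) ht (Metric.mem_ball_self hε)

/-- The slope of the velocity has derivative proportional to the curvature, so it is constant. -/
theorem eventually_cross_deriv_eq_zero {a : ℝ → ℝ × ℝ} {t₀ : ℝ} (ha : ContDiffAt ℝ 2 a t₀)
    (ha' : deriv a t₀ ≠ 0)
    (hcurv : ∀ᶠ t in 𝓝 t₀, cross (deriv a t) (deriv (deriv a) t) = 0) :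
    ∀ᶠ t in 𝓝 t₀, cross (deriv a t₀) (deriv a t) = 0 := by
  obtain ⟨w, hw⟩ := exists_cross_ne_zero ha'
  rw [cross_swap, neg_ne_zero] at hw
  have hderiv {t : ℝ} (ht : ContDiffAt ℝ 2 a t) :
      HasStrictDerivAt (deriv a) (deriv (deriv a) t) t :=
    (ht.derivWithin (m := 1) le_rfl).hasStrictDerivAt one_ne_zero
  have hne : ∀ᶠ t in 𝓝 t₀, cross w (deriv a t) ≠ 0 :=
    (hasStrictDerivAt_cross w (hderiv ha)).hasDerivAt.continuousAt.eventually_ne hw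
  have hslope : ∀ᶠ t in 𝓝 t₀, HasDerivAt (fun s => frameSlope w (deriv a t₀) (deriv a s)) 0 t := by
    filter_upwards [hne, hcurv, ha.eventually (by simp)] with t ht htc hta
    simpa only [htc, mul_zero, zero_div] using
      (hasStrictDerivAt_frameSlope w (deriv a t₀) (hderiv hta) ht).hasDerivAt
  filter_upwards [hne, eventually_eq_of_eventually_hasDerivAt_zero hslope] with t ht heq
  rw [frameSlope, frameSlope, cross_self, zero_div] at heq
  exact (div_eq_zero_iff.1 heq).resolve_right ht

theorem eventually_mem_tangentLine {a : ℝ → ℝ × ℝ} {t₀ : ℝ} (ha : ContDiffAt ℝ 2 a t₀)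
    (ha' : deriv a t₀ ≠ 0)
    (hcurv : ∀ᶠ t in 𝓝 t₀, cross (deriv a t) (deriv (deriv a) t) = 0) :
    ∀ᶠ t in 𝓝 t₀, deriv a t ∈ Submodule.span ℝ {deriv a t₀} ∧
      a t - a t₀ ∈ Submodule.span ℝ {deriv a t₀} := by
  have hdir := eventually_cross_deriv_eq_zero ha ha' hcurv
  have hconst : ∀ᶠ t in 𝓝 t₀, HasDerivAt (fun s => cross (deriv a t₀) (a s - a t₀)) 0 t := by
    filter_upwards [hdir, ha.eventually (by simp)] with t ht hta
    simpa only [ht] using (hasStrictDerivAt_cross (deriv a t₀)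
      ((hta.hasStrictDerivAt two_ne_zero).sub_const (a t₀))).hasDerivAt
  filter_upwards [hdir, eventually_eq_of_eventually_hasDerivAt_zero hconst] with t ht hcross
  rw [sub_self, cross_zero_right] at hcross
  exact ⟨mem_span_singleton_of_cross_eq_zero ha' ht,
    mem_span_singleton_of_cross_eq_zero ha' hcross⟩

end Curvature

section Orbits

variable {E : Type*}

/-- The values of three curves `c i` at the parameters `x i z`. -/
def along (c : Fin 3 → ℝ → ℝ × ℝ) (x : Fin 3 → E → ℝ) (z : E) (i : Fin 3) : ℝ × ℝ := c i (x i z)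

/-- The offsets of the triangle with vertices `a i (x i z)` relative to the tangent lines of the
curves `a i`, as functions of `z`. -/
noncomputable def tangentOffset (a : Fin 3 → ℝ → ℝ × ℝ) (x : Fin 3 → E → ℝ) (i j : Fin 3) (z : E) :
    ℝ :=
  offset (along a x z) (along (fun i => deriv (a i)) x z) i j

theorem contDiffAt_tangentOffset [NormedAddCommGroup E] [NormedSpace ℝ E]
    {a : Fin 3 → ℝ → ℝ × ℝ} {x : Fin 3 → E → ℝ} {z : E} {n : WithTop ℕ∞}
    (ha : ∀ i, ContDiffAt ℝ (n + 1) (a i) (x i z)) (hx : ∀ i, ContDiffAt ℝ n (x i) z)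
    (i j : Fin 3) : ContDiffAt ℝ n (tangentOffset a x i j) z := by
  have hp (k : Fin 3) : ContDiffAt ℝ n (fun w => a k (x k w)) z :=
    ((ha k).of_le le_self_add).comp z (hx k)
  have hτ : ContDiffAt ℝ n (fun w => deriv (a i) (x i w)) z :=
    ((ha i).derivWithin le_rfl).comp z (hx i)
  exact (hτ.fst.mul ((hp j).sub (hp i)).snd).sub (hτ.snd.mul ((hp j).sub (hp i)).fst)

end Orbits

/-! ### Second-order relations -/

section SecondOrderAlgebra

variable {𝕜 : Type*} [Field 𝕜]

/-- The weights of the linear relation between the velocities of the vertices: a vertex is weighted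
inversely to its offsets relative to the tangent lines at the other two vertices. -/
def tangentWeight (p τ : Fin 3 → 𝕜 × 𝕜) (i : Fin 3) : 𝕜 :=
  (offset p τ (i + 1) i * offset p τ (i + 2) i)⁻¹

/-- The defect in the proportionality of the vectors `τ i` and `κ i`, measured on the two sides of
the triangle `p` through the vertex `p i`. -/
def bending (p τ κ : Fin 3 → 𝕜 × 𝕜) (i : Fin 3) : 𝕜 :=
  offset p κ i (i + 1) / offset p τ i (i + 1) - offset p κ i (i + 2) / offset p τ i (i + 2)

/-- The determinant of the three lines through `p i` in the directions `τ i`; it vanishes when these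
lines are concurrent. -/
def linesDet (p τ : Fin 3 → 𝕜 × 𝕜) : 𝕜 :=
  cross (τ 2) (τ 0) * offset p τ 1 0 - cross (τ 1) (τ 0) * offset p τ 2 0

theorem linesDet_eq (p τ : Fin 3 → 𝕜 × 𝕜) (i : Fin 3) :
    cross (τ (i + 2)) (τ i) * offset p τ (i + 1) i -
      cross (τ (i + 1)) (τ i) * offset p τ (i + 2) i = linesDet p τ := by
  match i with
  | 0 => rfl
  | 1 | 2 =>
    simp only [linesDet, offset, cross, Fin.reduceAdd, Prod.fst_sub, Prod.snd_sub]
    ring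

theorem linesDet_mul_tangentWeight {p τ : Fin 3 → 𝕜 × 𝕜} {i : Fin 3}
    (h₁ : offset p τ (i + 1) i ≠ 0) (h₂ : offset p τ (i + 2) i ≠ 0) :
    linesDet p τ * tangentWeight p τ i =
      cross (τ (i + 2)) (τ i) / offset p τ (i + 2) i -
        cross (τ (i + 1)) (τ i) / offset p τ (i + 1) i := by
  rw [← linesDet_eq p τ i, tangentWeight]
  field_simp

theorem cross_eq_zero_of_bending_eq_zero {p τ κ : Fin 3 → 𝕜 × 𝕜} {i : Fin 3}
    (hp : cross (p (i + 1) - p i) (p (i + 2) - p i) ≠ 0) (h₁ : offset p τ i (i + 1) ≠ 0)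
    (h₂ : offset p τ i (i + 2) ≠ 0) (h : bending p τ κ i = 0) : cross (τ i) (κ i) = 0 := by
  rw [bending, sub_eq_zero, div_eq_div_iff h₁ h₂] at h
  refine (mul_eq_zero.1 ?_).resolve_right hp
  simp only [offset, cross] at h ⊢
  linear_combination -h

theorem eq_zero_of_proportional_of_sum_eq_zero [CharZero 𝕜] {n W k : Fin 3 → 𝕜} (hn : ∀ i, n i ≠ 0)
    (hW : W 2 ≠ 0) (hnW : ∀ i j, n i * W j = n j * W i) (hkW : ∀ i j, k i * W j = k j * W i)
    (h : ∑ i, k i * (n (i + 1) * W (i + 2)) = 0) (i : Fin 3) : k i = 0 := by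
  have hW₀ : W 0 ≠ 0 := right_ne_zero_of_mul ((hnW 0 2).symm.trans_ne (mul_ne_zero (hn 0) hW))
  have hk₀ : 3 * (k 0 * (n 1 * W 2)) = 0 := by
    simp only [Fin.sum_univ_three, Fin.reduceAdd, zero_add] at h
    linear_combination h + 2 * n 2 * hkW 0 1 + 2 * k 0 * hnW 1 2 + n 0 * hkW 1 2 - k 1 * hnW 0 2
  have hk₀ : k 0 = 0 :=
    (mul_eq_zero.1 ((mul_eq_zero.1 hk₀).resolve_left three_ne_zero)).resolve_right
      (mul_ne_zero (hn 1) hW)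
  exact (mul_eq_zero.1 ((hkW i 0).trans (by rw [hk₀, zero_mul]))).resolve_right hW₀

end SecondOrderAlgebra

section Wedge

variable {𝕜 E : Type*} [NormedField 𝕜] [AddCommGroup E] [Module 𝕜 E] [TopologicalSpace E]

/-- The value at `(e, f)` of the exterior product of two linear forms. -/
def wedge (α β : StrongDual 𝕜 E) (e f : E) : 𝕜 := α e * β f - α f * β e

theorem mul_wedge_comm_of_sum_smul_eq_zero {c : Fin 3 → 𝕜} {ω : Fin 3 → StrongDual 𝕜 E}
    (h : ∑ i, c i • ω i = 0) (e f : E) (i j : Fin 3) :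
    c i * wedge (ω (j + 1)) (ω (j + 2)) e f = c j * wedge (ω (i + 1)) (ω (i + 2)) e f := by
  simp only [Fin.sum_univ_three] at h
  have he : c 0 * ω 0 e + c 1 * ω 1 e + c 2 * ω 2 e = 0 := DFunLike.congr_fun h e
  have hf : c 0 * ω 0 f + c 1 * ω 1 f + c 2 * ω 2 f = 0 := DFunLike.congr_fun h f
  have h₀₁ : c 0 * wedge (ω 2) (ω 0) e f = c 1 * wedge (ω 1) (ω 2) e f := by
    simp only [wedge]; linear_combination ω 2 e * hf - ω 2 f * he
  have h₁₂ : c 1 * wedge (ω 0) (ω 1) e f = c 2 * wedge (ω 2) (ω 0) e f := by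
    simp only [wedge]; linear_combination ω 0 e * hf - ω 0 f * he
  have h₂₀ : c 2 * wedge (ω 1) (ω 2) e f = c 0 * wedge (ω 0) (ω 1) e f := by
    simp only [wedge]; linear_combination ω 1 e * hf - ω 1 f * he
  fin_cases i <;> fin_cases j <;> first | rfl | assumption | (symm; assumption)

end Wedge

section SecondOrder

variable {E : Type*} [NormedAddCommGroup E] [NormedSpace ℝ E]

theorem sum_inv_smul_eq_of_prod_eventuallyEq {ι : Type*} [Fintype ι] {f h : ι → E → ℝ}
    {f' h' : ι → StrongDual ℝ E} {z : E} (hf : ∀ i, HasFDerivAt (f i) (f' i) z)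
    (hh : ∀ i, HasFDerivAt (h i) (h' i) z) (hf₀ : ∀ i, f i z ≠ 0) (hh₀ : ∀ i, h i z ≠ 0)
    (heq : ∀ᶠ w in 𝓝 z, ∏ i, f i w = ∏ i, h i w) :
    ∑ i, (f i z)⁻¹ • f' i = ∑ i, (h i z)⁻¹ • h' i := by
  have hlog_f := HasFDerivAt.fun_sum fun i (_ : i ∈ Finset.univ) => (hf i).log (hf₀ i)
  have hlog_h := HasFDerivAt.fun_sum fun i (_ : i ∈ Finset.univ) => (hh i).log (hh₀ i)
  refine hlog_f.unique (hlog_h.congr_of_eventuallyEq ?_)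
  filter_upwards [heq, eventually_all.2 fun i => (hf i).continuousAt.eventually_ne (hf₀ i),
    eventually_all.2 fun i => (hh i).continuousAt.eventually_ne (hh₀ i)] with w hw hfw hhw
  rw [← Real.log_prod fun i _ => hfw i, ← Real.log_prod fun i _ => hhw i, hw]

/-- This is the symmetry of second derivatives: `d (∑ μ i • dx i) = ∑ dμ i ∧ dx i`. -/
theorem sum_wedge_eq_zero_of_sum_smul_fderiv_eq_zero {ι : Type*} [Fintype ι] {μ x : ι → E → ℝ}
    {μ' : ι → StrongDual ℝ E} {z : E} (hμ : ∀ i, HasFDerivAt (μ i) (μ' i) z)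
    (hx : ∀ i, ContDiffAt ℝ 2 (x i) z) (h : ∀ᶠ w in 𝓝 z, ∑ i, μ i w • fderiv ℝ (x i) w = 0)
    (e f : E) : ∑ i, wedge (μ' i) (fderiv ℝ (x i) z) e f = 0 := by
  have hdx (i : ι) : HasFDerivAt (fderiv ℝ (x i)) (fderiv ℝ (fderiv ℝ (x i)) z) z :=
    (((hx i).fderiv_right (m := 1) le_rfl).differentiableAt one_ne_zero).hasFDerivAt
  have hsum := HasFDerivAt.fun_sum fun i (_ : i ∈ Finset.univ) => (hμ i).smul (hdx i)
  have hzero := hsum.unique ((hasFDerivAt_const 0 z).congr_of_eventuallyEq h)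
  have hsymm (i : ι) : fderiv ℝ (fderiv ℝ (x i)) z e f = fderiv ℝ (fderiv ℝ (x i)) z f e :=
    ((hx i).isSymmSndFDerivAt (by simp)).eq e f
  have hef : _ = (0 : ℝ) := DFunLike.congr_fun (DFunLike.congr_fun hzero e) f
  have hfe : _ = (0 : ℝ) := DFunLike.congr_fun (DFunLike.congr_fun hzero f) e
  simp only [sum_apply, add_apply, smul_apply, ContinuousLinearMap.smulRight_apply,
    smul_eq_mul] at hef hfe
  rw [← sub_eq_zero.2 (hef.trans hfe.symm), ← Finset.sum_sub_distrib]
  refine Finset.sum_congr rfl fun i _ => ?_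
  rw [hsymm, wedge]
  ring

variable {a : Fin 3 → ℝ → ℝ × ℝ} {x : Fin 3 → E → ℝ} {z : E}

local notation "ℓ" => tangentOffset a x
local notation "𝐩" => along a x
local notation "𝐭" => along (fun i => deriv (a i)) x
local notation "𝐤" => along (fun i => deriv (deriv (a i))) x

theorem hasFDerivAt_tangentOffset (ha : ∀ i, ContDiffAt ℝ 2 (a i) (x i z))
    (hx : ∀ i, DifferentiableAt ℝ (x i) z) (i j : Fin 3) :
    HasFDerivAt (ℓ i j) (offset (𝐩 z) (𝐤 z) i j • fderiv ℝ (x i) z +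
      cross (𝐭 z i) (𝐭 z j) • fderiv ℝ (x j) z) z := by
  have hp (k : Fin 3) : HasDerivAt (a k) (deriv (a k) (x k z)) (x k z) :=
    ((ha k).differentiableAt two_ne_zero).hasDerivAt
  have hτ : HasDerivAt (deriv (a i)) (deriv (deriv (a i)) (x i z)) (x i z) :=
    (((ha i).derivWithin (m := 1) le_rfl).differentiableAt one_ne_zero).hasDerivAt
  have hsub : tangentOffset a x i j = fun w => cross (deriv (a i) (x i w)) (a j (x j w)) -
      cross (deriv (a i) (x i w)) (a i (x i w)) := by
    funext w
    simp only [tangentOffset, offset, along, cross, Prod.fst_sub, Prod.snd_sub]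
    ring
  rw [hsub]
  refine ((hasFDerivAt_cross_comp hτ (hp j) (hx i).hasFDerivAt (hx j).hasFDerivAt).fun_sub
    (hasFDerivAt_cross_comp hτ (hp i) (hx i).hasFDerivAt (hx i).hasFDerivAt)).congr_fderiv ?_
  ext w
  simp only [along, offset, cross, Prod.fst_sub, Prod.snd_sub, add_apply, sub_apply, smul_apply,
    smul_eq_mul]
  ring

theorem sum_bending_smul_fderiv_eq_zero (ha : ∀ i, ContDiffAt ℝ 2 (a i) (x i z))
    (hx : ∀ i, DifferentiableAt ℝ (x i) z) (hne : ∀ i j, i ≠ j → ℓ i j z ≠ 0)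
    (hM : ∀ᶠ w in 𝓝 z, MenelausRelation (𝐩 w) (𝐭 w))
    (hsum : ∑ i, tangentWeight (𝐩 z) (𝐭 z) i • fderiv ℝ (x i) z = 0) :
    ∑ i, bending (𝐩 z) (𝐭 z) (𝐤 z) i • fderiv ℝ (x i) z = 0 := by
  have hlog := sum_inv_smul_eq_of_prod_eventuallyEq
    (fun i => hasFDerivAt_tangentOffset ha hx i (i + 1))
    (fun i => hasFDerivAt_tangentOffset ha hx i (i + 2)) (fun i => hne _ _ (by simp))
    (fun i => hne _ _ (by simp)) hM
  have hdet (i : Fin 3) := linesDet_mul_tangentWeight (p := 𝐩 z) (τ := 𝐭 z) (i := i)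
    (hne _ _ (by simp)) (hne _ _ (by simp))
  ext e
  have hlog : _ = _ := DFunLike.congr_fun hlog e
  have hsum : _ = (0 : ℝ) := DFunLike.congr_fun hsum e
  have h₀ := hdet 0
  have h₁ := hdet 1
  have h₂ := hdet 2
  simp only [Fin.sum_univ_three, add_apply, smul_apply, smul_eq_mul, Fin.reduceAdd, zero_add,
    bending, zero_apply, tangentOffset] at hlog hsum h₀ h₁ h₂ ⊢
  simp only [along] at hlog hsum h₀ h₁ h₂ ⊢
  linear_combination hlog - linesDet (𝐩 z) (𝐭 z) * hsum + fderiv ℝ (x 0) z e * h₀ +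
    fderiv ℝ (x 1) z e * h₁ + fderiv ℝ (x 2) z e * h₂

theorem hasFDerivAt_tangentWeight (ha : ∀ i, ContDiffAt ℝ 2 (a i) (x i z))
    (hx : ∀ i, DifferentiableAt ℝ (x i) z) (hne : ∀ i j, i ≠ j → ℓ i j z ≠ 0) (i : Fin 3) :
    HasFDerivAt (fun w => tangentWeight (𝐩 w) (𝐭 w) i)
      (-tangentWeight (𝐩 z) (𝐭 z) i • ((ℓ (i + 1) i z)⁻¹ •
        (offset (𝐩 z) (𝐤 z) (i + 1) i • fderiv ℝ (x (i + 1)) z +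
        cross (𝐭 z (i + 1)) (𝐭 z i) • fderiv ℝ (x i) z) + (ℓ (i + 2) i z)⁻¹ •
        (offset (𝐩 z) (𝐤 z) (i + 2) i • fderiv ℝ (x (i + 2)) z +
        cross (𝐭 z (i + 2)) (𝐭 z i) • fderiv ℝ (x i) z))) z := by
  have h₁ := hasFDerivAt_tangentOffset ha hx (i + 1) i
  have h₂ := hasFDerivAt_tangentOffset ha hx (i + 2) i
  have hne₁ : ℓ (i + 1) i z ≠ 0 := hne _ _ (by simp)
  have hne₂ : ℓ (i + 2) i z ≠ 0 := hne _ _ (by simp)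
  refine ((hasDerivAt_inv (mul_ne_zero hne₁ hne₂)).comp_hasFDerivAt z (h₁.mul h₂)).congr_fderiv ?_
  ext e
  simp only [tangentWeight, add_apply, smul_apply, smul_eq_mul]
  simp only [tangentOffset, along] at hne₁ hne₂ ⊢
  field_simp
  ring

theorem sum_bending_mul_eq_zero (ha : ∀ i, ContDiffAt ℝ 2 (a i) (x i z))
    (hx : ∀ i, ContDiffAt ℝ 2 (x i) z) (hne : ∀ i j, i ≠ j → ℓ i j z ≠ 0)
    (hsum : ∀ᶠ w in 𝓝 z, ∑ i, tangentWeight (𝐩 w) (𝐭 w) i • fderiv ℝ (x i) w = 0) (e f : E) :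
    ∑ i, bending (𝐩 z) (𝐭 z) (𝐤 z) i * (tangentWeight (𝐩 z) (𝐭 z) (i + 1) *
      wedge (fderiv ℝ (x i) z) (fderiv ℝ (x (i + 1)) z) e f) = 0 := by
  have hint := sum_wedge_eq_zero_of_sum_smul_fderiv_eq_zero (hasFDerivAt_tangentWeight ha
    (fun i => (hx i).differentiableAt two_ne_zero) hne) hx hsum e f
  have hcomm := mul_wedge_comm_of_sum_smul_eq_zero hsum.self_of_nhds e f
  have hcomm₀ (i : Fin 3) : offset (𝐩 z) (𝐤 z) i (i + 2) / offset (𝐩 z) (𝐭 z) i (i + 2) * _ = _ :=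
    congrArg _ (hcomm (i + 1) (i + 2))
  have h₀ := hcomm₀ 0
  have h₁ := hcomm₀ 1
  have h₂ := hcomm₀ 2
  simp only [Fin.sum_univ_three, add_apply, smul_apply, smul_eq_mul, Fin.reduceAdd, zero_add,
    bending, tangentOffset, wedge] at hint h₀ h₁ h₂ ⊢
  linear_combination -hint - h₀ - h₁ - h₂

theorem cross_deriv_deriv_eq_zero (ha : ∀ i, ContDiffAt ℝ 2 (a i) (x i z))
    (hx : ∀ i, ContDiffAt ℝ 2 (x i) z) (hne : ∀ i j, i ≠ j → ℓ i j z ≠ 0)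
    (harea : ∀ i, cross (𝐩 z (i + 1) - 𝐩 z i) (𝐩 z (i + 2) - 𝐩 z i) ≠ 0)
    (hM : ∀ᶠ w in 𝓝 z, MenelausRelation (𝐩 w) (𝐭 w))
    (hsum : ∀ᶠ w in 𝓝 z, ∑ i, tangentWeight (𝐩 w) (𝐭 w) i • fderiv ℝ (x i) w = 0) {e f : E}
    (hef : wedge (fderiv ℝ (x 0) z) (fderiv ℝ (x 1) z) e f ≠ 0) (i : Fin 3) :
    cross (deriv (a i) (x i z)) (deriv (deriv (a i)) (x i z)) = 0 := by
  have hbend := sum_bending_smul_fderiv_eq_zero ha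
    (fun i => (hx i).differentiableAt two_ne_zero) hne hM hsum.self_of_nhds
  refine cross_eq_zero_of_bending_eq_zero (harea i) (hne _ _ (by simp)) (hne _ _ (by simp))
    (eq_zero_of_proportional_of_sum_eq_zero (fun j => inv_ne_zero (mul_ne_zero ?_ ?_)) hef
      (mul_wedge_comm_of_sum_smul_eq_zero hsum.self_of_nhds e f)
      (mul_wedge_comm_of_sum_smul_eq_zero hbend e f) ?_ i)
  · exact hne _ _ (by simp)
  · exact hne _ _ (by simp)
  · simpa only [fin_three_add_two_add_one, fin_three_add_two_add_two] using
      sum_bending_mul_eq_zero ha hx hne hsum e f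

end SecondOrder

/-! ### Families of triangular orbits -/

/-- The three vertex parameters as functions of the first two of them. -/
def params (g : ℝ × ℝ → ℝ) : Fin 3 → ℝ × ℝ → ℝ := ![Prod.fst, Prod.snd, g]

/-- A two-parameter family of triangular orbits inscribed in the curves `a i`, with field directions
`v i`: the third vertex parameter is the function `g` of the first two, which range over `Ω`. -/
structure ReflectiveFamily (a v : Fin 3 → ℝ → ℝ × ℝ) (Ω : Set (ℝ × ℝ)) (g : ℝ × ℝ → ℝ) : Prop where
  isOpen : IsOpen Ω
  continuousOn : ContinuousOn g Ω
  contDiffAt {z : ℝ × ℝ} (hz : z ∈ Ω) (i : Fin 3) : ContDiffAt ℝ 2 (a i) (params g i z)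
  triangle {z : ℝ × ℝ} (hz : z ∈ Ω) : ReflectiveTriangle (along a (params g) z)
    (along (fun i => deriv (a i)) (params g) z) (along v (params g) z)

/-- The partial derivative of the third vertex parameter with respect to the vertex parameter `i`,
the vertex parameter `j` being fixed. -/
noncomputable def thirdPartial (a : Fin 3 → ℝ → ℝ × ℝ) (g : ℝ × ℝ → ℝ) (i j : Fin 3) (z : ℝ × ℝ) :
    ℝ :=
  -(tangentOffset a (params g) i j z * tangentOffset a (params g) j 2 z ^ 2 /
    (tangentOffset a (params g) j i z ^ 2 * tangentOffset a (params g) 2 j z))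

namespace ReflectiveFamily

variable {a v : Fin 3 → ℝ → ℝ × ℝ} {Ω : Set (ℝ × ℝ)} {g : ℝ × ℝ → ℝ} {z : ℝ × ℝ}

local notation "ℓ" => tangentOffset a (params g)

theorem tangentOffset_ne_zero (h : ReflectiveFamily a v Ω g) (hz : z ∈ Ω) {i j : Fin 3}
    (hij : i ≠ j) : ℓ i j z ≠ 0 :=
  (h.triangle hz).offset_ne_zero hij

theorem hasStrictDerivAt (h : ReflectiveFamily a v Ω g) (hz : z ∈ Ω) (i : Fin 3) :
    HasStrictDerivAt (a i) (deriv (a i) (params g i z)) (params g i z) :=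
  (h.contDiffAt hz i).hasStrictDerivAt two_ne_zero

theorem continuousAt (h : ReflectiveFamily a v Ω g) (hz : z ∈ Ω) : ContinuousAt g z :=
  h.continuousOn.continuousAt (h.isOpen.mem_nhds hz)

theorem cross_sub_tangent (i j : Fin 3) (z : ℝ × ℝ) :
    cross (along a (params g) z j - along a (params g) z i)
      (along (fun i => deriv (a i)) (params g) z j) = ℓ j i z := by
  simp only [tangentOffset, offset, cross, Prod.fst_sub, Prod.snd_sub]
  ring

theorem hasDerivAt_comp_of_const (h : ReflectiveFamily a v Ω g) {γ : ℝ → ℝ × ℝ} {t : ℝ}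
    (hγ : ContinuousAt γ t) (ht : γ t ∈ Ω) {i j : Fin 3} (hij : i ≠ j) (hi : i ≠ 2) (hj : j ≠ 2)
    (hconst : ∀ s, params g i (γ s) = params g i (γ t)) (hparam : ∀ s, params g j (γ s) = s) :
    HasDerivAt (g ∘ γ) (thirdPartial a g j i (γ t)) t := by
  have hslope : ∀ᶠ s in 𝓝 t,
      frameSlope (deriv (a i) (params g i (γ t))) (v i (params g i (γ t)))
        (a j s - a i (params g i (γ t))) +
      frameSlope (deriv (a i) (params g i (γ t))) (v i (params g i (γ t)))
        (a 2 (g (γ s)) - a i (params g i (γ t))) = 0 := by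
    filter_upwards [hγ.eventually (h.isOpen.mem_nhds ht)] with s hs
    have hs := (h.triangle hs).frameSlope_add_eq_zero hij hi hj
    simp only [along, hconst s, hparam s] at hs
    exact hs
  have hj_deriv := h.hasStrictDerivAt ht j
  have hji := h.tangentOffset_ne_zero ht hij
  rw [tangentOffset, offset, along, along, along, hparam] at hji
  rw [hparam t] at hj_deriv
  refine (hasDerivAt_of_frameSlope_add_eq_zero hj_deriv (h.hasStrictDerivAt ht 2)
    ((h.continuousAt ht).comp hγ) ((h.triangle ht).cross_frame_ne_zero i) hji
    (h.tangentOffset_ne_zero ht hi)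
    ((cross_sub_tangent i 2 _).trans_ne (h.tangentOffset_ne_zero ht hi.symm)) hslope).congr_deriv ?_
  rw [thirdPartial, ← cross_sub_tangent i j, ← cross_sub_tangent i 2]
  simp only [tangentOffset, offset, along, hparam]
  rfl

theorem hasDerivAt_fst (h : ReflectiveFamily a v Ω g) (hz : z ∈ Ω) :
    HasDerivAt (fun s => g (s, z.2)) (thirdPartial a g 0 1 z) z.1 :=
  h.hasDerivAt_comp_of_const (Continuous.prodMk_left z.2).continuousAt hz (i := 1) (j := 0)
    (by simp) (by simp) (by simp) (fun _ => rfl) fun _ => rfl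

theorem hasDerivAt_snd (h : ReflectiveFamily a v Ω g) (hz : z ∈ Ω) :
    HasDerivAt (fun u => g (z.1, u)) (thirdPartial a g 1 0 z) z.2 :=
  h.hasDerivAt_comp_of_const (Continuous.prodMk_right z.1).continuousAt hz (i := 0) (j := 1)
    (by simp) (by simp) (by simp) (fun _ => rfl) fun _ => rfl

theorem contDiffAt_params (h : ReflectiveFamily a v Ω g) {n : ℕ} (hg : ContDiffOn ℝ n g Ω)
    (hz : z ∈ Ω) (i : Fin 3) : ContDiffAt ℝ n (params g i) z := by
  fin_cases i
  · exact contDiffAt_fst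
  · exact contDiffAt_snd
  · exact hg.contDiffAt (h.isOpen.mem_nhds hz)

theorem contDiffAt_thirdPartial (h : ReflectiveFamily a v Ω g) {n : ℕ} (hn : n ≤ 1)
    (hg : ContDiffOn ℝ n g Ω) (hz : z ∈ Ω) {i j : Fin 3} (hij : i ≠ j) (hj : j ≠ 2) :
    ContDiffAt ℝ n (thirdPartial a g i j) z := by
  have hn₂ : (n : WithTop ℕ∞) + 1 ≤ 2 := by exact_mod_cast Nat.succ_le_succ hn
  have hoff (i j : Fin 3) : ContDiffAt ℝ n (ℓ i j) z :=
    contDiffAt_tangentOffset (fun k => (h.contDiffAt hz k).of_le hn₂) (h.contDiffAt_params hg hz)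
      i j
  exact (((hoff i j).mul ((hoff j 2).pow 2)).div (((hoff j i).pow 2).mul (hoff 2 j))
    (mul_ne_zero (pow_ne_zero 2 (h.tangentOffset_ne_zero hz hij.symm))
      (h.tangentOffset_ne_zero hz hj.symm))).neg

theorem hasStrictFDerivAt (h : ReflectiveFamily a v Ω g) (hz : z ∈ Ω) :
    HasStrictFDerivAt g
      (thirdPartial a g 0 1 z • .fst ℝ ℝ ℝ + thirdPartial a g 1 0 z • .snd ℝ ℝ ℝ) z :=
  hasStrictFDerivAt_of_partial
    (eventually_of_mem (h.isOpen.mem_nhds hz) fun _ hw => h.hasDerivAt_fst hw)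
    (eventually_of_mem (h.isOpen.mem_nhds hz) fun _ hw => h.hasDerivAt_snd hw)
    (h.contDiffAt_thirdPartial zero_le_one (contDiffOn_zero.2 h.continuousOn) hz (by simp)
      (by simp)).continuousAt
    (h.contDiffAt_thirdPartial zero_le_one (contDiffOn_zero.2 h.continuousOn) hz (by simp)
      (by simp)).continuousAt

theorem contDiffOn_succ (h : ReflectiveFamily a v Ω g) {n : ℕ} (hn : n ≤ 1)
    (hg : ContDiffOn ℝ n g Ω) : ContDiffOn ℝ (n + 1) g Ω := fun z hz => by
  refine ContDiffAt.contDiffWithinAt (contDiffAt_succ_iff_hasFDerivAt.2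
    ⟨_, ⟨Ω, h.isOpen.mem_nhds hz, fun w hw => (h.hasStrictFDerivAt hw).hasFDerivAt⟩, ?_⟩)
  exact ((h.contDiffAt_thirdPartial hn hg hz (by simp) (by simp)).smul contDiffAt_const).add
    ((h.contDiffAt_thirdPartial hn hg hz (by simp) (by simp)).smul contDiffAt_const)

theorem contDiffOn_two (h : ReflectiveFamily a v Ω g) : ContDiffOn ℝ 2 g Ω := by
  have h₁ : ContDiffOn ℝ (1 : ℕ) g Ω := by
    simpa using h.contDiffOn_succ zero_le_one (contDiffOn_zero.2 h.continuousOn)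
  simpa only [Nat.cast_one, one_add_one_eq_two] using h.contDiffOn_succ le_rfl h₁

theorem hasStrictDerivAt_frameSlope_third (h : ReflectiveFamily a v Ω g) (hz : z ∈ Ω) {i : Fin 3}
    (hi : 2 ≠ i) :
    HasStrictDerivAt (fun s => frameSlope (deriv (a 2) (g z)) (v 2 (g z)) (a i s - a 2 (g z)))
      (cross (deriv (a 2) (g z)) (v 2 (g z)) * ℓ i 2 z / ℓ 2 i z ^ 2) (params g i z) := by
  rw [← cross_sub_tangent]
  exact hasStrictDerivAt_frameSlope _ _ ((h.hasStrictDerivAt hz i).sub_const (a 2 (g z)))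
    (h.tangentOffset_ne_zero hz hi)

/-- On a level set of `g` the third vertex is fixed, so its two sides keep opposite slopes. -/
theorem thirdPartial_mul_eq (h : ReflectiveFamily a v Ω g) (hz : z ∈ Ω) :
    thirdPartial a g 0 1 z * (ℓ 1 2 z / ℓ 2 1 z ^ 2) =
      thirdPartial a g 1 0 z * (ℓ 0 2 z / ℓ 2 0 z ^ 2) := by
  have hzero {y : ℝ × ℝ} (hy : y ∈ Ω) (hgy : g y = g z) :
      frameSlope (deriv (a 2) (g z)) (v 2 (g z)) (a 0 y.1 - a 2 (g z)) +
        frameSlope (deriv (a 2) (g z)) (v 2 (g z)) (a 1 y.2 - a 2 (g z)) = 0 := by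
    rw [← hgy]
    exact (h.triangle hy).frameSlope_add_eq_zero (i := 2) (j := 0) (k := 1) (by simp) (by simp)
      (by simp)
  have hlevel := fderiv_mul_eq_of_const_on_level (h.hasStrictFDerivAt hz)
    (((h.hasStrictDerivAt_frameSlope_third hz (i := 0) (by simp)).comp_hasStrictFDerivAt z
      hasStrictFDerivAt_fst).fun_add
      ((h.hasStrictDerivAt_frameSlope_third hz (i := 1) (by simp)).comp_hasStrictFDerivAt z
        hasStrictFDerivAt_snd))
    (eventually_of_mem (h.isOpen.mem_nhds hz) fun y hy hgy =>
      (hzero hy hgy).trans (hzero hz rfl).symm) (1, 0) (0, 1)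
  have hframe : cross (deriv (a 2) (g z)) (v 2 (g z)) ≠ 0 := (h.triangle hz).cross_frame_ne_zero 2
  simp only [add_apply, smul_apply, ContinuousLinearMap.coe_fst', ContinuousLinearMap.coe_snd',
    smul_eq_mul, mul_one, mul_zero, add_zero, zero_add] at hlevel
  refine mul_left_cancel₀ hframe ?_
  linear_combination hlevel

theorem menelausRelation (h : ReflectiveFamily a v Ω g) (hz : z ∈ Ω) :
    MenelausRelation (along a (params g) z) (along (fun i => deriv (a i)) (params g) z) := by
  have hne {i j : Fin 3} (hij : i ≠ j) := h.tangentOffset_ne_zero hz hij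
  have h₀₁ : ℓ 0 1 z ≠ 0 := hne (by simp)
  have h₁₀ : ℓ 1 0 z ≠ 0 := hne (by simp)
  have h₂₀ : ℓ 2 0 z ≠ 0 := hne (by simp)
  have h₂₁ : ℓ 2 1 z ≠ 0 := hne (by simp)
  have hlevel := h.thirdPartial_mul_eq hz
  simp only [thirdPartial] at hlevel
  field_simp at hlevel
  rw [MenelausRelation, Fin.prod_univ_three, Fin.prod_univ_three]
  refine (Odd.strictMono_pow (n := 3) (by decide)).injective ?_
  change (ℓ 0 1 z * ℓ 1 2 z * ℓ 2 0 z) ^ 3 = (ℓ 0 2 z * ℓ 1 0 z * ℓ 2 1 z) ^ 3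
  linear_combination -hlevel

theorem fderiv_params_two (h : ReflectiveFamily a v Ω g) (hz : z ∈ Ω) :
    fderiv ℝ (params g 2) z =
      thirdPartial a g 0 1 z • .fst ℝ ℝ ℝ + thirdPartial a g 1 0 z • .snd ℝ ℝ ℝ :=
  (h.hasStrictFDerivAt hz).hasFDerivAt.fderiv

theorem sum_tangentWeight_smul_fderiv_eq_zero (h : ReflectiveFamily a v Ω g) (hz : z ∈ Ω) :
    ∑ i, tangentWeight (along a (params g) z) (along (fun i => deriv (a i)) (params g) z) i •
      fderiv ℝ (params g i) z = 0 := by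
  have hne {i j : Fin 3} (hij : i ≠ j) := h.tangentOffset_ne_zero hz hij
  have h₀₁ : ℓ 0 1 z ≠ 0 := hne (by simp)
  have h₀₂ : ℓ 0 2 z ≠ 0 := hne (by simp)
  have h₁₀ : ℓ 1 0 z ≠ 0 := hne (by simp)
  have h₁₂ : ℓ 1 2 z ≠ 0 := hne (by simp)
  have h₂₀ : ℓ 2 0 z ≠ 0 := hne (by simp)
  have h₂₁ : ℓ 2 1 z ≠ 0 := hne (by simp)
  have hM : ℓ 0 1 z * ℓ 1 2 z * ℓ 2 0 z = ℓ 0 2 z * ℓ 1 0 z * ℓ 2 1 z := by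
    have hM := h.menelausRelation hz
    rwa [MenelausRelation, Fin.prod_univ_three, Fin.prod_univ_three] at hM
  have hfst : fderiv ℝ (params g 0) z = .fst ℝ ℝ ℝ := fderiv_fst
  have hsnd : fderiv ℝ (params g 1) z = .snd ℝ ℝ ℝ := fderiv_snd
  rw [Fin.sum_univ_three, hfst, hsnd, h.fderiv_params_two hz]
  change (ℓ 1 0 z * ℓ 2 0 z)⁻¹ • _ + (ℓ 2 1 z * ℓ 0 1 z)⁻¹ • _ + (ℓ 0 2 z * ℓ 1 2 z)⁻¹ • _ = _
  simp only [thirdPartial]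
  ext
  · simp only [mul_inv_rev, smul_add, ContinuousLinearMap.add_comp, ContinuousLinearMap.smul_comp,
      ContinuousLinearMap.fst_comp_inl, ContinuousLinearMap.snd_comp_inl, smul_zero, add_zero,
      neg_smul, smul_neg, add_apply, smul_apply, ContinuousLinearMap.id_apply, smul_eq_mul, mul_one,
      neg_apply, ContinuousLinearMap.zero_comp, zero_apply]
    field_simp
    linear_combination -hM
  · simp only [mul_inv_rev, smul_add, ContinuousLinearMap.add_comp, ContinuousLinearMap.smul_comp,
      ContinuousLinearMap.fst_comp_inr, ContinuousLinearMap.snd_comp_inr, smul_zero, zero_add,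
      neg_smul, smul_neg, add_apply, smul_apply, ContinuousLinearMap.id_apply, smul_eq_mul, mul_one,
      neg_apply, ContinuousLinearMap.zero_comp, zero_apply]
    field_simp
    linear_combination hM

theorem thirdPartial_ne_zero (h : ReflectiveFamily a v Ω g) (hz : z ∈ Ω) :
    thirdPartial a g 0 1 z ≠ 0 :=
  neg_ne_zero.2 (div_ne_zero
    (mul_ne_zero (h.tangentOffset_ne_zero hz (by simp))
      (pow_ne_zero 2 (h.tangentOffset_ne_zero hz (by simp))))
    (mul_ne_zero (pow_ne_zero 2 (h.tangentOffset_ne_zero hz (by simp)))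
      (h.tangentOffset_ne_zero hz (by simp))))

theorem map_params_nhds (h : ReflectiveFamily a v Ω g) (hz : z ∈ Ω) (i : Fin 3) :
    map (params g i) (𝓝 z) = 𝓝 (params g i z) := by
  fin_cases i
  · exact map_fst_nhds z
  · exact map_snd_nhds z
  · refine (h.hasStrictFDerivAt hz).map_nhds_eq_of_surj (LinearMap.range_eq_top.2 fun y => ?_)
    exact ⟨(y / thirdPartial a g 0 1 z, 0), by simp [h.thirdPartial_ne_zero hz, mul_div_cancel₀]⟩

theorem cross_deriv_deriv_eq_zero (h : ReflectiveFamily a v Ω g) (hz : z ∈ Ω) (i : Fin 3) :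
    cross (deriv (a i) (params g i z)) (deriv (deriv (a i)) (params g i z)) = 0 := by
  refine ProjectiveBilliard.cross_deriv_deriv_eq_zero (h.contDiffAt hz)
    (h.contDiffAt_params h.contDiffOn_two hz) (fun i j hij => h.tangentOffset_ne_zero hz hij)
    (h.triangle hz).cross_sides_ne_zero
    (eventually_of_mem (h.isOpen.mem_nhds hz) fun _ hw => h.menelausRelation hw)
    (eventually_of_mem (h.isOpen.mem_nhds hz)
      fun _ hw => h.sum_tangentWeight_smul_fderiv_eq_zero hw)
    (e := (1, 0)) (f := (0, 1)) ?_ i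
  simp [wedge, params, fderiv_fst, fderiv_snd]

theorem eventually_mem_tangentLine (h : ReflectiveFamily a v Ω g) (hz : z ∈ Ω) (i : Fin 3) :
    ∀ᶠ w in 𝓝 z, deriv (a i) (params g i w) ∈ Submodule.span ℝ {deriv (a i) (params g i z)} ∧
      a i (params g i w) - a i (params g i z) ∈
        Submodule.span ℝ {deriv (a i) (params g i z)} := by
  have hcurv : ∀ᶠ t in 𝓝 (params g i z), cross (deriv (a i) t) (deriv (deriv (a i)) t) = 0 := by
    rw [← h.map_params_nhds hz i, eventually_map]
    exact eventually_of_mem (h.isOpen.mem_nhds hz) fun w hw => h.cross_deriv_deriv_eq_zero hw i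
  have hne : deriv (a i) (params g i z) ≠ 0 :=
    ne_zero_of_cross_ne_zero ((h.triangle hz).cross_frame_ne_zero i)
  exact Tendsto.eventually (h.map_params_nhds hz i).le
    (ProjectiveBilliard.eventually_mem_tangentLine (h.contDiffAt hz i) hne hcurv)

theorem exists_basis_eventually (h : ReflectiveFamily a v Ω g) (hz : z ∈ Ω) :
    ∃ b : Module.Basis (Fin 3) ℝ (ℝ × ℝ × ℝ), ∀ᶠ w in 𝓝 z, ∀ i,
      liftPt ℝ (a i (params g i w)) ∈ Submodule.span ℝ {b (i + 1), b (i + 2)} ∧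
      b i ∈ Submodule.span ℝ {liftPt ℝ (a i (params g i w)), liftDir ℝ (v i (params g i w))} := by
  obtain ⟨b, hb⟩ := (h.triangle hz).exists_basis_of_mem_tangentLines (h.menelausRelation hz)
  refine ⟨b, ?_⟩
  filter_upwards [h.isOpen.mem_nhds hz, eventually_all.2 (h.eventually_mem_tangentLine hz)]
    with w hw hlines
  exact hb _ _ _ (h.triangle hw) (h.menelausRelation hw) (fun i => (hlines i).1)
    fun i => (hlines i).2

end ReflectiveFamily

end ProjectiveBilliard

theorem no_3_reflective_smooth_planar_projective_billiard_except_right_spherical_general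
    (a₁ a₂ a₃ v₁ v₂ v₃ : ℝ → ℝ × ℝ) (Ω : Set (ℝ × ℝ)) (g : ℝ × ℝ → ℝ)
    (hΩo : IsOpen Ω) (hΩne : Ω.Nonempty) (hg : ContinuousOn g Ω)
    (ha₁ : ∀ z ∈ Ω, ContDiffAt ℝ 2 a₁ z.1) (ha₂ : ∀ z ∈ Ω, ContDiffAt ℝ 2 a₂ z.2)
    (ha₃ : ∀ z ∈ Ω, ContDiffAt ℝ 2 a₃ (g z))
    (hcol : ∀ z ∈ Ω, ¬ Collinear ℝ {a₁ z.1, a₂ z.2, a₃ (g z)})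
    (href₁ : ∀ z ∈ Ω,
      PlaneSym ℝ (v₁ z.1) (deriv a₁ z.1) (a₂ z.2 - a₁ z.1) (a₃ (g z) - a₁ z.1))
    (href₂ : ∀ z ∈ Ω,
      PlaneSym ℝ (v₂ z.2) (deriv a₂ z.2) (a₁ z.1 - a₂ z.2) (a₃ (g z) - a₂ z.2))
    (href₃ : ∀ z ∈ Ω,
      PlaneSym ℝ (v₃ (g z)) (deriv a₃ (g z)) (a₁ z.1 - a₃ (g z)) (a₂ z.2 - a₃ (g z))) :
    ∃ P Q R : ℝ × ℝ × ℝ, LinearIndependent ℝ ![P, Q, R] ∧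
      ∃ Ω' : Set (ℝ × ℝ), Ω' ⊆ Ω ∧ Ω'.Nonempty ∧ IsOpen Ω' ∧
        ∀ z ∈ Ω',
          liftPt ℝ (a₁ z.1) ∈ Submodule.span ℝ {P, Q} ∧
          liftPt ℝ (a₂ z.2) ∈ Submodule.span ℝ {Q, R} ∧
          liftPt ℝ (a₃ (g z)) ∈ Submodule.span ℝ {R, P} ∧
          R ∈ Submodule.span ℝ {liftPt ℝ (a₁ z.1), liftDir ℝ (v₁ z.1)} ∧
          P ∈ Submodule.span ℝ {liftPt ℝ (a₂ z.2), liftDir ℝ (v₂ z.2)} ∧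
          Q ∈ Submodule.span ℝ {liftPt ℝ (a₃ (g z)), liftDir ℝ (v₃ (g z))} := by
  have hfamily : ProjectiveBilliard.ReflectiveFamily ![a₁, a₂, a₃] ![v₁, v₂, v₃] Ω g :=
    { isOpen := hΩo
      continuousOn := hg
      contDiffAt := fun hz => ProjectiveBilliard.forall_fin_three.2 ⟨ha₁ _ hz, ha₂ _ hz, ha₃ _ hz⟩
      triangle := fun hz =>
        { area_ne_zero := fun h =>
            hcol _ hz (ProjectiveBilliard.collinear_of_cross_eq_zero h)
          planeSym := ProjectiveBilliard.forall_fin_three.2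
            ⟨href₁ _ hz, (href₂ _ hz).symm, href₃ _ hz⟩ } }
  obtain ⟨z₀, hz₀⟩ := hΩne
  obtain ⟨b, hb⟩ := hfamily.exists_basis_eventually hz₀
  obtain ⟨Ω', hΩ', hΩ'o, hz₀'⟩ := eventually_nhds_iff.1 ((hΩo.eventually_mem hz₀).and hb)
  refine ⟨b 1, b 2, b 0, ?_, Ω', fun z hz => (hΩ' z hz).1, ⟨z₀, hz₀'⟩, hΩ'o, fun z hz => ?_⟩
  · convert b.linearIndependent.comp (· + 1) (add_left_injective 1) using 1
    exact funext (ProjectiveBilliard.forall_fin_three.2 ⟨rfl, rfl, rfl⟩)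
  · obtain ⟨h₁, h₂, h₃⟩ := ProjectiveBilliard.forall_fin_three.1 (hΩ' z hz).2
    exact ⟨h₁.1, h₂.1, h₃.1, h₁.2, h₂.2, h₃.2⟩

/-- **Theorem 1.1.** Every 3-reflective triple of `C^∞`-smooth line-framed curves in `ℝ²`
is right-spherical near its orbits. -/
theorem no_3_reflective_smooth_planar_projective_billiard_except_right_spherical
    (U₁ U₂ U₃ : Set ℝ) (a₁ a₂ a₃ v₁ v₂ v₃ : ℝ → ℝ × ℝ)
    (hU₁o : IsOpen U₁) (hU₂o : IsOpen U₂) (hU₃o : IsOpen U₃)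
    (hU₁c : IsConnected U₁) (hU₂c : IsConnected U₂) (hU₃c : IsConnected U₃)
    -- the `(aᵢ, vᵢ)` are smooth line-framed curves
    (ha₁ : ContDiffOn ℝ (⊤ : ℕ∞) a₁ U₁) (ha₂ : ContDiffOn ℝ (⊤ : ℕ∞) a₂ U₂)
    (ha₃ : ContDiffOn ℝ (⊤ : ℕ∞) a₃ U₃)
    (ha₁i : Set.InjOn a₁ U₁) (ha₂i : Set.InjOn a₂ U₂) (ha₃i : Set.InjOn a₃ U₃)
    (ha₁' : ∀ s ∈ U₁, deriv a₁ s ≠ 0) (ha₂' : ∀ u ∈ U₂, deriv a₂ u ≠ 0)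
    (ha₃' : ∀ t ∈ U₃, deriv a₃ t ≠ 0)
    (hv₁ : ContDiffOn ℝ (⊤ : ℕ∞) v₁ U₁) (hv₂ : ContDiffOn ℝ (⊤ : ℕ∞) v₂ U₂)
    (hv₃ : ContDiffOn ℝ (⊤ : ℕ∞) v₃ U₃)
    (hv₁t : ∀ s ∈ U₁, v₁ s ∉ Submodule.span ℝ {deriv a₁ s})
    (hv₂t : ∀ u ∈ U₂, v₂ u ∉ Submodule.span ℝ {deriv a₂ u})
    (hv₃t : ∀ t ∈ U₃, v₃ t ∉ Submodule.span ℝ {deriv a₃ t})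
    -- 3-reflectivity data (Ω, g)
    (Ω : Set (ℝ × ℝ)) (g : ℝ × ℝ → ℝ)
    (hΩo : IsOpen Ω) (hΩne : Ω.Nonempty) (hΩ : Ω ⊆ U₁ ×ˢ U₂)
    (hg : ContinuousOn g Ω) (hgm : ∀ z ∈ Ω, g z ∈ U₃)
    -- (i) vertices not collinear
    (hcol : ∀ z ∈ Ω, ¬ Collinear ℝ {a₁ z.1, a₂ z.2, a₃ (g z)})
    -- (ii) non-tangency
    (htan₁ : ∀ z ∈ Ω, a₂ z.2 - a₁ z.1 ∉ Submodule.span ℝ {deriv a₁ z.1} ∧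
      a₃ (g z) - a₁ z.1 ∉ Submodule.span ℝ {deriv a₁ z.1})
    (htan₂ : ∀ z ∈ Ω, a₁ z.1 - a₂ z.2 ∉ Submodule.span ℝ {deriv a₂ z.2} ∧
      a₃ (g z) - a₂ z.2 ∉ Submodule.span ℝ {deriv a₂ z.2})
    (htan₃ : ∀ z ∈ Ω, a₁ z.1 - a₃ (g z) ∉ Submodule.span ℝ {deriv a₃ (g z)} ∧
      a₂ z.2 - a₃ (g z) ∉ Submodule.span ℝ {deriv a₃ (g z)})
    -- (iii) reflection law at each vertex
    (href₁ : ∀ z ∈ Ω,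
      PlaneSym ℝ (v₁ z.1) (deriv a₁ z.1) (a₂ z.2 - a₁ z.1) (a₃ (g z) - a₁ z.1))
    (href₂ : ∀ z ∈ Ω,
      PlaneSym ℝ (v₂ z.2) (deriv a₂ z.2) (a₁ z.1 - a₂ z.2) (a₃ (g z) - a₂ z.2))
    (href₃ : ∀ z ∈ Ω,
      PlaneSym ℝ (v₃ (g z)) (deriv a₃ (g z)) (a₁ z.1 - a₃ (g z)) (a₂ z.2 - a₃ (g z))) :
    ∃ P Q R : ℝ × ℝ × ℝ, LinearIndependent ℝ ![P, Q, R] ∧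
      ∃ Ω' : Set (ℝ × ℝ), Ω' ⊆ Ω ∧ Ω'.Nonempty ∧ IsOpen Ω' ∧
        ∀ z ∈ Ω',
          liftPt ℝ (a₁ z.1) ∈ Submodule.span ℝ {P, Q} ∧
          liftPt ℝ (a₂ z.2) ∈ Submodule.span ℝ {Q, R} ∧
          liftPt ℝ (a₃ (g z)) ∈ Submodule.span ℝ {R, P} ∧
          R ∈ Submodule.span ℝ {liftPt ℝ (a₁ z.1), liftDir ℝ (v₁ z.1)} ∧
          P ∈ Submodule.span ℝ {liftPt ℝ (a₂ z.2), liftDir ℝ (v₂ z.2)} ∧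
          Q ∈ Submodule.span ℝ {liftPt ℝ (a₃ (g z)), liftDir ℝ (v₃ (g z))} := by
  have htwo : (2 : WithTop ℕ∞) ≤ (⊤ : ℕ∞) := WithTop.coe_le_coe.2 le_top
  exact no_3_reflective_smooth_planar_projective_billiard_except_right_spherical_general
    a₁ a₂ a₃ v₁ v₂ v₃ Ω g hΩo hΩne hg
    (fun z hz => (ha₁.contDiffAt (hU₁o.mem_nhds (hΩ hz).1)).of_le htwo)
    (fun z hz => (ha₂.contDiffAt (hU₂o.mem_nhds (hΩ hz).2)).of_le htwo)
    (fun z hz => (ha₃.contDiffAt (hU₃o.mem_nhds (hgm z hz))).of_le htwo) hcol href₁ href₂ href₃
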